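/- Subalgebra embedding from node deletion: let A be a generalized Cartan matrix of size k, fix an index i₀, and let A' be the (k−1)×(k−1) principal submatrix of A obtained by deleting row and column i₀ (A' is again a GCM). Then the Lie algebra homomorphism g(A') → g(A) sending each generator h_j, e_j, f_j of g(A') (j ≠ i₀) to the same-named generator of g(A) is well defined and injective. -/

import Mathlib

noncomputable section

open CartanMatrix

/-- A generalized Cartan matrix: `A i i = 2`, off-diagonal entries are non-positive, and
`A i j = 0 ↔ A j i = 0`. -/
def IsGCM {B : Type*} (A : Matrix B B ℤ) : Prop :=
  (∀ i, A i i = 2) ∧ (∀ i j, i ≠ j → A i j ≤ 0) ∧ (∀ i j, A i j = 0 ↔ A j i = 0)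

/-- The images in the Kac–Moody algebra `Matrix.ToLieAlgebra ℚ A` of the generators of the
free Lie algebra. -/
def KMgen {B : Type*} [DecidableEq B] (A : Matrix B B ℤ) (x : Generators B) :
    Matrix.ToLieAlgebra ℚ A :=
  LieSubmodule.Quotient.mk (N := Relations.toIdeal ℚ A) (FreeLieAlgebra.of ℚ x)

/-- The Cartan generator `h i`. -/
def gH {B : Type*} [DecidableEq B] (A : Matrix B B ℤ) (i : B) : Matrix.ToLieAlgebra ℚ A :=
  KMgen A (Generators.H i)

/-- The raising generator `e i`. -/
def gE {B : Type*} [DecidableEq B] (A : Matrix B B ℤ) (i : B) : Matrix.ToLieAlgebra ℚ A :=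
  KMgen A (Generators.E i)

/-- The lowering generator `f i`. -/
def gF {B : Type*} [DecidableEq B] (A : Matrix B B ℤ) (i : B) : Matrix.ToLieAlgebra ℚ A :=
  KMgen A (Generators.F i)

/-!
Let `x` be in the kernel and decompose it triangularly as `x = y + t + z`, with `y` a combination of
brackets of the `f j`, `t` a combination of the `h j`, and `z` a combination of brackets of the
`e j`. The Verma module `V` of `g(A)` of lowest weight `wt` and lowest weight vector `v` is
constructed by hand: its vectors are classes of words in the `e i`, modulo the Serre relations. Any
operators satisfying the Serre relations of `A` can be substituted for the letters of these words.
Take the operators on `g(A') ⊕ ℚ d` given by bracketing with `e j`, where `⁅e j, d⁆ = e j`, for `j`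
in the index set of `A'`, and zero for the other indices. Applied to `d`, an iterated bracket `w` of
`n` of the `e j` then gives `n • w`. So `x v = 0` yields both `z = 0` (compare degrees) and
`wt t = 0`, and varying `wt` yields `t = 0`. There remains `x = y`, and the Chevalley involution of
`g(A)` turns this case into that of `x = z`.
-/

attribute [local instance] LieRing.ofAssociativeRing

open LieAlgebra

section Relations

variable {B L : Type*} [LieRing L] {A : Matrix B B ℤ} {h e f : B → L}

/-- The Chevalley relations of the matrix `A`, that is, the relations of its Kac–Moody algebra
other than the Serre relations. -/
structure ChevalleyRelations (A : Matrix B B ℤ) (h e f : B → L) : Prop where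
  lie_h_h (i j : B) : ⁅h i, h j⁆ = 0
  lie_e_f (i : B) : ⁅e i, f i⁆ = h i
  lie_e_f_of_ne (i j : B) (hij : i ≠ j) : ⁅e i, f j⁆ = 0
  lie_h_e (i j : B) : ⁅h i, e j⁆ = A i j • e j
  lie_h_f (i j : B) : ⁅h i, f j⁆ = -(A i j • f j)

namespace ChevalleyRelations

theorem symm (r : ChevalleyRelations A h e f) : ChevalleyRelations A (-h) f e where
  lie_h_h i j := by simp [r.lie_h_h]
  lie_e_f i := by rw [← lie_skew, r.lie_e_f, Pi.neg_apply]
  lie_e_f_of_ne i j hij := by rw [← lie_skew, r.lie_e_f_of_ne j i hij.symm, neg_zero]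
  lie_h_e i j := by simp [r.lie_h_f]
  lie_h_f i j := by simp [r.lie_h_e]

theorem submatrix (r : ChevalleyRelations A h e f) {B' : Type*} {σ : B' → B}
    (hσ : Function.Injective σ) : ChevalleyRelations (A.submatrix σ σ) (h ∘ σ) (e ∘ σ) (f ∘ σ) where
  lie_h_h i j := r.lie_h_h (σ i) (σ j)
  lie_e_f i := r.lie_e_f (σ i)
  lie_e_f_of_ne i j hij := r.lie_e_f_of_ne (σ i) (σ j) (hσ.ne hij)
  lie_h_e i j := r.lie_h_e (σ i) (σ j)
  lie_h_f i j := r.lie_h_f (σ i) (σ j)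

end ChevalleyRelations

variable (R : Type*) [CommRing R] [LieAlgebra R L] {L' : Type*} [LieRing L'] [LieAlgebra R L']

theorem lie_ad_pow_of_lie_eq_zero {x z : L} (hxz : ⁅x, z⁆ = 0) (n : ℕ) (y : L) :
    ⁅x, (ad R L z ^ n) y⁆ = (ad R L z ^ n) ⁅x, y⁆ := by
  have hcomm : Commute (ad R L x) (ad R L z) := by
    rw [commute_iff_lie_eq, ← LieHom.map_lie, hxz, map_zero]
  exact LinearMap.congr_fun (hcomm.pow_right n) y

theorem map_ad_pow (φ : L →ₗ⁅R⁆ L') (x y : L) (n : ℕ) :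
    φ ((ad R L x ^ n) y) = (ad R L' (φ x) ^ n) (φ y) := by
  induction n with
  | zero => rfl
  | succ n ih => simp only [pow_succ', Module.End.mul_apply, ad_apply, LieHom.map_lie, ih]

/-- The left-hand side `(ad xᵢ)^(1 - Aᵢⱼ) xⱼ` of the Serre relations; the exponent is the intended
one when `Aᵢⱼ ≤ 0`. -/
def serreElement (A : Matrix B B ℤ) (x : B → L) (i j : B) : L :=
  (ad R L (x i) ^ ((-A i j).toNat + 1)) (x j)

/-- The Serre relations of the matrix `A`. They are imposed for `i = j` too, where they hold
trivially. -/
def SerreRelations (A : Matrix B B ℤ) (x : B → L) : Prop :=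
  ∀ i j, serreElement R A x i j = 0

theorem map_serreElement (φ : L →ₗ⁅R⁆ L') (x : B → L) (i j : B) :
    φ (serreElement R A x i j) = serreElement R A (φ ∘ x) i j :=
  map_ad_pow R φ _ _ _

theorem serreElement_self (x : B → L) (i : B) : serreElement R A x i i = 0 := by
  simp [serreElement, pow_succ]

namespace ChevalleyRelations

theorem lie_h_ad_pow_f (r : ChevalleyRelations A h e f) (k i j : B) (n : ℕ) :
    ⁅h k, (ad R L (f i) ^ n) (f j)⁆ = -((n * A k i + A k j) • (ad R L (f i) ^ n) (f j)) := by
  induction n with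
  | zero => simp [r.lie_h_f]
  | succ n ih =>
    rw [pow_succ', Module.End.mul_apply, ad_apply, leibniz_lie, ih, r.lie_h_f, neg_lie, lie_neg,
      zsmul_lie, lie_zsmul]
    push_cast
    module

theorem lie_e_ad_pow_f (r : ChevalleyRelations A h e f) {i j : B} (hii : A i i = 2) (hij : i ≠ j)
    (n : ℕ) : ⁅e i, (ad R L (f i) ^ (n + 1)) (f j)⁆ =
      -(((n + 1) * (n + A i j)) • (ad R L (f i) ^ n) (f j)) := by
  induction n with
  | zero => simp [leibniz_lie (e i), r.lie_e_f, r.lie_e_f_of_ne i j hij, r.lie_h_f]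
  | succ n ih =>
    rw [pow_succ', Module.End.mul_apply, ad_apply, leibniz_lie, ih, r.lie_e_f, r.lie_h_ad_pow_f R,
      lie_neg, lie_zsmul, hii, ← ad_apply R, ← Module.End.mul_apply, ← pow_succ']
    push_cast
    module

/-- The case `k = j` is where `A i j = 0 → A j i = 0` enters: the bracket is `A j i • f i` if
`A i j = 0`, and otherwise a multiple of `⁅f i, f i⁆`. -/
theorem lie_e_serreElement (r : ChevalleyRelations A h e f) (hA : IsGCM A) (k : B) {i j : B}
    (hij : i ≠ j) : ⁅e k, serreElement R A f i j⁆ = 0 := by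
  have hle : A i j ≤ 0 := hA.2.1 i j hij
  rw [serreElement]
  rcases eq_or_ne k i with rfl | hki
  · rw [r.lie_e_ad_pow_f R (hA.1 k) hij, Int.toNat_of_nonneg (neg_nonneg.2 hle), neg_add_cancel,
      mul_zero, zero_smul, neg_zero]
  rw [lie_ad_pow_of_lie_eq_zero R (r.lie_e_f_of_ne k i hki)]
  rcases eq_or_ne k j with rfl | hkj
  · rw [r.lie_e_f, pow_succ, Module.End.mul_apply, ad_apply, ← lie_skew, r.lie_h_f, neg_neg,
      map_zsmul]
    rcases hle.eq_or_lt with h0 | hlt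
    · rw [(hA.2.2 i k).1 h0, zero_smul]
    · obtain ⟨m, hm⟩ := Nat.exists_eq_succ_of_ne_zero (n := (-A i k).toNat) (by lia)
      rw [hm, pow_succ, Module.End.mul_apply, ad_apply, lie_self, map_zero, smul_zero]
  · rw [r.lie_e_f_of_ne k j hkj, map_zero]

end ChevalleyRelations

/-- The defining relations of the Kac–Moody algebra of `A`. -/
structure KacMoodyRelations (A : Matrix B B ℤ) (h e f : B → L) : Prop extends
    ChevalleyRelations A h e f where
  serre_e : SerreRelations R A e
  serre_f : SerreRelations R A f

namespace KacMoodyRelations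

variable {R}

theorem symm (r : KacMoodyRelations R A h e f) : KacMoodyRelations R A (-h) f e where
  __ := r.toChevalleyRelations.symm
  serre_e := r.serre_f
  serre_f := r.serre_e

theorem submatrix (r : KacMoodyRelations R A h e f) {B' : Type*} {σ : B' → B}
    (hσ : Function.Injective σ) :
    KacMoodyRelations R (A.submatrix σ σ) (h ∘ σ) (e ∘ σ) (f ∘ σ) where
  __ := r.toChevalleyRelations.submatrix hσ
  serre_e i j := r.serre_e (σ i) (σ j)
  serre_f i j := r.serre_f (σ i) (σ j)

end KacMoodyRelations

end Relations

section Presentation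

variable {B : Type*} {A : Matrix B B ℤ}

theorem adE_eq_serreElement (R : Type*) [CommRing R] (i j : B) :
    Relations.adE R A (i, j) = serreElement R A (FreeLieAlgebra.of R ∘ Generators.E) i j := by
  rw [serreElement, pow_succ]
  rfl

theorem adF_eq_serreElement (R : Type*) [CommRing R] (i j : B) :
    Relations.adF R A (i, j) = serreElement R A (FreeLieAlgebra.of R ∘ Generators.F) i j := by
  rw [serreElement, pow_succ]
  rfl

variable [DecidableEq B] {L : Type*} [LieRing L] [LieAlgebra ℚ L] {h e f : B → L}

/-- The presentation of the Kac–Moody algebra of `A` as a quotient of a free Lie algebra. -/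
def kmMk (A : Matrix B B ℤ) : FreeLieAlgebra ℚ (Generators B) →ₗ⁅ℚ⁆ A.ToLieAlgebra ℚ where
  toLinearMap := (Relations.toIdeal ℚ A).toSubmodule.mkQ
  map_lie' := rfl

theorem kmMk_surjective : Function.Surjective (kmMk A) :=
  Submodule.mkQ_surjective _

theorem kmMk_eq_zero {x : FreeLieAlgebra ℚ (Generators B)} (hx : x ∈ Relations.toSet ℚ A) :
    kmMk A x = 0 :=
  (Submodule.Quotient.mk_eq_zero _).2 (LieSubmodule.subset_lieSpan hx)

@[simp]
theorem kmMk_H (i : B) : kmMk A (FreeLieAlgebra.of ℚ (.H i)) = gH A i := rfl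

@[simp]
theorem kmMk_E (i : B) : kmMk A (FreeLieAlgebra.of ℚ (.E i)) = gE A i := rfl

@[simp]
theorem kmMk_F (i : B) : kmMk A (FreeLieAlgebra.of ℚ (.F i)) = gF A i := rfl

theorem kacMoodyRelations_gH_gE_gF (A : Matrix B B ℤ) :
    KacMoodyRelations ℚ A (gH A) (gE A) (gF A) where
  lie_h_h i j := kmMk_eq_zero (.inl <| .inl <| .inl <| .inl <| .inl ⟨(i, j), rfl⟩)
  lie_e_f i := by
    have := kmMk_eq_zero (A := A) (.inl <| .inl <| .inl <| .inl <| .inr ⟨(i, i), rfl⟩)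
    simpa [Relations.EF, sub_eq_zero] using this
  lie_e_f_of_ne i j hij := by
    have := kmMk_eq_zero (A := A) (.inl <| .inl <| .inl <| .inl <| .inr ⟨(i, j), rfl⟩)
    simpa [Relations.EF, hij] using this
  lie_h_e i j := by
    have := kmMk_eq_zero (A := A) (.inl <| .inl <| .inl <| .inr ⟨(i, j), rfl⟩)
    simpa [Relations.HE, sub_eq_zero] using this
  lie_h_f i j := by
    have := kmMk_eq_zero (A := A) (.inl <| .inl <| .inr ⟨(i, j), rfl⟩)
    simpa [Relations.HF, ← eq_neg_iff_add_eq_zero] using this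
  serre_e i j := by
    have := kmMk_eq_zero (A := A) (.inl <| .inr ⟨(i, j), rfl⟩)
    rwa [adE_eq_serreElement, map_serreElement] at this
  serre_f i j := by
    have := kmMk_eq_zero (A := A) (.inr ⟨(i, j), rfl⟩)
    rwa [adF_eq_serreElement, map_serreElement] at this

/-- The family of generators assembled from its three subfamilies. -/
def generatorMap (h e f : B → L) : Generators B → L
  | .H i => h i
  | .E i => e i
  | .F i => f i

theorem toIdeal_le_ker_lift (r : KacMoodyRelations ℚ A h e f) :
    Relations.toIdeal ℚ A ≤ (FreeLieAlgebra.lift ℚ (generatorMap h e f)).ker := by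
  have hof (x : Generators B) : FreeLieAlgebra.lift ℚ (generatorMap h e f) (FreeLieAlgebra.of ℚ x) =
      generatorMap h e f x := FreeLieAlgebra.lift_of_apply ..
  refine LieSubmodule.lieSpan_le.2 ?_
  rintro x (((((⟨⟨i, j⟩, rfl⟩ | ⟨⟨i, j⟩, rfl⟩) | ⟨⟨i, j⟩, rfl⟩) | ⟨⟨i, j⟩, rfl⟩) |
    ⟨⟨i, j⟩, rfl⟩) | ⟨⟨i, j⟩, rfl⟩) <;> rw [SetLike.mem_coe, LieHom.mem_ker]
  · simp [Relations.HH, hof, generatorMap, r.lie_h_h]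
  · obtain rfl | hij := eq_or_ne i j
    · simp [Relations.EF, hof, generatorMap, r.lie_e_f]
    · simp [Relations.EF, hof, generatorMap, r.lie_e_f_of_ne i j hij, hij]
  · simp [Relations.HE, hof, generatorMap, r.lie_h_e]
  · simp [Relations.HF, hof, generatorMap, r.lie_h_f]
  · rw [adE_eq_serreElement, map_serreElement, ← r.serre_e i j]
    exact congrArg (serreElement ℚ A · i j) (funext fun k ↦ hof (.E k))
  · rw [adF_eq_serreElement, map_serreElement, ← r.serre_f i j]
    exact congrArg (serreElement ℚ A · i j) (funext fun k ↦ hof (.F k))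

/-- The universal property of the Kac–Moody algebra of `A`: families satisfying its defining
relations are the images of the generators under a homomorphism. -/
def kmLift (r : KacMoodyRelations ℚ A h e f) : A.ToLieAlgebra ℚ →ₗ⁅ℚ⁆ L where
  toLinearMap := (Relations.toIdeal ℚ A).toSubmodule.liftQ
    (FreeLieAlgebra.lift ℚ (generatorMap h e f)).toLinearMap (toIdeal_le_ker_lift r)
  map_lie' {x y} := by
    obtain ⟨x, rfl⟩ := kmMk_surjective x
    obtain ⟨y, rfl⟩ := kmMk_surjective y
    exact LieHom.map_lie (FreeLieAlgebra.lift ℚ (generatorMap h e f)) x y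

@[simp]
theorem kmLift_gH (r : KacMoodyRelations ℚ A h e f) (i : B) : kmLift r (gH A i) = h i :=
  FreeLieAlgebra.lift_of_apply ..

@[simp]
theorem kmLift_gE (r : KacMoodyRelations ℚ A h e f) (i : B) : kmLift r (gE A i) = e i :=
  FreeLieAlgebra.lift_of_apply ..

@[simp]
theorem kmLift_gF (r : KacMoodyRelations ℚ A h e f) (i : B) : kmLift r (gF A i) = f i :=
  FreeLieAlgebra.lift_of_apply ..

theorem lieSpan_gE_union_gF (A : Matrix B B ℤ) :
    LieSubalgebra.lieSpan ℚ (A.ToLieAlgebra ℚ) (Set.range (gE A) ∪ Set.range (gF A)) = ⊤ := by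
  set K := LieSubalgebra.lieSpan ℚ (A.ToLieAlgebra ℚ) (Set.range (gE A) ∪ Set.range (gF A))
  have hE (i : B) : gE A i ∈ K := LieSubalgebra.subset_lieSpan (.inl ⟨i, rfl⟩)
  have hF (i : B) : gF A i ∈ K := LieSubalgebra.subset_lieSpan (.inr ⟨i, rfl⟩)
  have hH (i : B) : gH A i ∈ K :=
    (kacMoodyRelations_gH_gE_gF A).lie_e_f i ▸ K.lie_mem (hE i) (hF i)
  let g : FreeLieAlgebra ℚ (Generators B) →ₗ⁅ℚ⁆ K := FreeLieAlgebra.lift ℚ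
    (generatorMap (fun i ↦ ⟨gH A i, hH i⟩) (fun i ↦ ⟨gE A i, hE i⟩) (fun i ↦ ⟨gF A i, hF i⟩))
  have hg : K.incl.comp g = kmMk A := by
    refine FreeLieAlgebra.hom_ext ?_
    rintro (i | i | i) <;> exact congrArg K.incl (FreeLieAlgebra.lift_of_apply ..)
  refine eq_top_iff.2 fun x _ ↦ ?_
  obtain ⟨x, rfl⟩ := kmMk_surjective x
  exact hg ▸ (g x).2

/-- The Chevalley involution, which exchanges `e i` with `f i` and negates `h i` (without the signs
on `e i` and `f i` of the classical normalization). -/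
def chevalleyInvolution (A : Matrix B B ℤ) : A.ToLieAlgebra ℚ →ₗ⁅ℚ⁆ A.ToLieAlgebra ℚ :=
  kmLift (kacMoodyRelations_gH_gE_gF A).symm

end Presentation

section TriangularDecomposition

variable {R L : Type*} [CommRing R] [LieRing L] [LieAlgebra R L]

theorem lie_mem_of_mem_lieSpan {M : Type*} [AddCommGroup M] [Module R M] [LieRingModule L M]
    [LieModule R L M] {s : Set L} {P : Submodule R M} (hP : ∀ x ∈ s, ∀ m ∈ P, ⁅x, m⁆ ∈ P)
    {x : L} (hx : x ∈ LieSubalgebra.lieSpan R L s) : ∀ m ∈ P, ⁅x, m⁆ ∈ P := by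
  induction hx using LieSubalgebra.lieSpan_induction with
  | mem x hx => exact hP x hx
  | zero => simp
  | add x y _ _ ihx ihy => exact fun m hm ↦ add_lie x y m ▸ P.add_mem (ihx m hm) (ihy m hm)
  | smul c x _ ih => exact fun m hm ↦ smul_lie c x m ▸ P.smul_mem c (ih m hm)
  | lie x y _ _ ihx ihy =>
    intro m hm
    rw [lie_lie]
    exact P.sub_mem (ihx _ (ihy m hm)) (ihy _ (ihx m hm))

theorem lieSpan_le_of_lie_mem {s : Set L} {P : Submodule R L} (hs : s ⊆ P)
    (hP : ∀ x ∈ s, ∀ y ∈ P, ⁅x, y⁆ ∈ P) : (LieSubalgebra.lieSpan R L s).toSubmodule ≤ P := by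
  intro x hx
  induction hx using LieSubalgebra.lieSpan_induction with
  | mem x hx => exact hs hx
  | zero => exact P.zero_mem
  | add x y _ _ ihx ihy => exact P.add_mem ihx ihy
  | smul c x _ ih => exact P.smul_mem c ih
  | lie x y hx _ _ ihy => exact lie_mem_of_mem_lieSpan hP hx y ihy

theorem lie_mem_lieSpan_of_forall_mem {s : Set L} {z : L}
    (hz : ∀ x ∈ s, ⁅z, x⁆ ∈ LieSubalgebra.lieSpan R L s) {x : L}
    (hx : x ∈ LieSubalgebra.lieSpan R L s) : ⁅z, x⁆ ∈ LieSubalgebra.lieSpan R L s := by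
  induction hx using LieSubalgebra.lieSpan_induction with
  | mem x hx => exact hz x hx
  | zero => simp
  | add x y _ _ ihx ihy => exact lie_add z x y ▸ add_mem ihx ihy
  | smul c x _ ih => exact lie_smul c z x ▸ (LieSubalgebra.lieSpan R L s).smul_mem c ih
  | lie x y hx hy ihx ihy =>
    rw [leibniz_lie]
    exact add_mem (LieSubalgebra.lie_mem _ ihx hy) (LieSubalgebra.lie_mem _ hx ihy)

variable {B : Type*} {A : Matrix B B ℤ} {h e f : B → L}

variable (R) in
/-- The Borel subalgebra spanned by the `h i` and the subalgebra generated by the `e i`; encoded as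
a submodule, since closure under the bracket is not needed. -/
def borelPart (h e : B → L) : Submodule R L :=
  Submodule.span R (Set.range h) ⊔ (LieSubalgebra.lieSpan R L (Set.range e)).toSubmodule

theorem borelPart_neg (h e : B → L) : borelPart R (-h) e = borelPart R h e := by
  have hrange : Set.range (-h) = -Set.range h := by
    ext; simp [neg_eq_iff_eq_neg]
  rw [borelPart, borelPart, hrange, Submodule.span_neg]

namespace ChevalleyRelations

theorem lie_mem_lieSpan_of_mem_borelPart (r : ChevalleyRelations A h e f) {u x : L}
    (hu : u ∈ borelPart R h e) (hx : x ∈ LieSubalgebra.lieSpan R L (Set.range e)) :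
    ⁅u, x⁆ ∈ LieSubalgebra.lieSpan R L (Set.range e) := by
  obtain ⟨y, hy, z, hz, rfl⟩ := Submodule.mem_sup.1 hu
  rw [add_lie]
  refine add_mem ?_ (LieSubalgebra.lie_mem _ hz hx)
  clear hu
  induction hy using Submodule.span_induction with
  | mem y hy =>
    obtain ⟨k, rfl⟩ := hy
    refine lie_mem_lieSpan_of_forall_mem (Set.forall_mem_range.2 fun j ↦ ?_) hx
    rw [r.lie_h_e]
    exact zsmul_mem (LieSubalgebra.subset_lieSpan (Set.mem_range_self j)) _
  | zero => simp
  | add y y' _ _ ih ih' => exact add_lie y y' x ▸ add_mem ih ih'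
  | smul c y _ ih => exact smul_lie c y x ▸ LieSubalgebra.smul_mem _ c ih

theorem lie_f_mem_borelPart (r : ChevalleyRelations A h e f) (i : B) {x : L}
    (hx : x ∈ LieSubalgebra.lieSpan R L (Set.range e)) : ⁅f i, x⁆ ∈ borelPart R h e := by
  induction hx using LieSubalgebra.lieSpan_induction with
  | mem x hx =>
    obtain ⟨j, rfl⟩ := hx
    rw [← lie_skew]
    rcases eq_or_ne j i with rfl | hji
    · rw [r.lie_e_f]
      exact neg_mem (Submodule.mem_sup_left (Submodule.subset_span ⟨j, rfl⟩))
    · simp [r.lie_e_f_of_ne j i hji]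
  | zero => simp
  | add x y _ _ ihx ihy => exact lie_add (f i) x y ▸ add_mem ihx ihy
  | smul c x _ ih => exact lie_smul c (f i) x ▸ Submodule.smul_mem _ c ih
  | lie x y hx hy ihx ihy =>
    rw [leibniz_lie, ← lie_skew x]
    exact Submodule.mem_sup_right <| add_mem (r.lie_mem_lieSpan_of_mem_borelPart ihx hy)
      (neg_mem (r.lie_mem_lieSpan_of_mem_borelPart ihy hx))

theorem lie_f_mem_borelPart_sup_borelPart (r : ChevalleyRelations A h e f) (i : B) {x : L}
    (hx : x ∈ borelPart R h f ⊔ borelPart R h e) :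
    ⁅f i, x⁆ ∈ borelPart R h f ⊔ borelPart R h e := by
  have hf {y : L} (hy : y ∈ borelPart R h f) : ⁅f i, y⁆ ∈ borelPart R h f := by
    rw [← borelPart_neg] at hy ⊢
    rw [← lie_skew]
    exact neg_mem <| Submodule.mem_sup_right <|
      r.symm.lie_mem_lieSpan_of_mem_borelPart hy (LieSubalgebra.subset_lieSpan ⟨i, rfl⟩)
  obtain ⟨y, hy, z, hz, rfl⟩ := Submodule.mem_sup.1 hx
  obtain ⟨w, hw, b, hb, rfl⟩ := Submodule.mem_sup.1 hz
  rw [lie_add, lie_add, ← add_assoc, ← lie_add]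
  exact add_mem (Submodule.mem_sup_left (hf (add_mem hy (Submodule.mem_sup_left hw))))
    (Submodule.mem_sup_right (r.lie_f_mem_borelPart i hb))

theorem borelPart_sup_borelPart_eq_top (r : ChevalleyRelations A h e f)
    (hspan : LieSubalgebra.lieSpan R L (Set.range e ∪ Set.range f) = ⊤) :
    borelPart R h f ⊔ borelPart R h e = ⊤ := by
  rw [eq_top_iff, ← LieSubalgebra.top_toSubmodule, ← hspan]
  have subset_borelPart {g e : B → L} : Set.range e ⊆ borelPart R g e :=
    fun _ hx ↦ Submodule.mem_sup_right (LieSubalgebra.subset_lieSpan hx)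
  refine lieSpan_le_of_lie_mem ?_ ?_
  · exact Set.union_subset (fun _ hx ↦ Submodule.mem_sup_right (subset_borelPart hx))
      fun _ hx ↦ Submodule.mem_sup_left (subset_borelPart hx)
  · rintro _ (⟨i, rfl⟩ | ⟨i, rfl⟩) y hy
    · rw [sup_comm, ← borelPart_neg, ← borelPart_neg h f] at hy ⊢
      exact r.symm.lie_f_mem_borelPart_sup_borelPart i hy
    · exact r.lie_f_mem_borelPart_sup_borelPart i hy

end ChevalleyRelations

end TriangularDecomposition

section FreeVerma

variable {R B M : Type*} [CommRing R] [AddCommGroup M] [Module R M]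
  (b : Module.Basis (List B) R M)

/-- The action of `e i` on the free lowest weight Verma module, the one of the Lie algebra presented
by the Chevalley relations alone. That module is encoded as any module with a basis `b` indexed by
words: `b [j₁, …, jₙ]` stands for `e j₁ ⋯ e jₙ v`, where `v = b []` is the lowest weight vector. -/
def wordRaise (i : B) : Module.End R M := b.constr R fun l ↦ b (i :: l)

@[simp]
theorem wordRaise_basis (i : B) (l : List B) : wordRaise b i (b l) = b (i :: l) :=
  b.constr_basis ..

theorem eq_zero_of_lie_wordRaise_eq_zero {T : Module.End R M} (hnil : T (b []) = 0)
    (hT : ∀ j, ⁅wordRaise b j, T⁆ = 0) : T = 0 := by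
  refine b.ext fun l ↦ ?_
  rw [LinearMap.zero_apply]
  induction l with
  | nil => exact hnil
  | cons j l ih => simpa [Ring.lie_def, ih] using LinearMap.congr_fun (hT j) (b l)

variable (A : Matrix B B ℤ) (wt : B → R)

/-- The eigenvalue of `h i` on the word `l` when the lowest weight is `wt`. -/
def wordWeight (i : B) (l : List B) : R := wt i + (l.map fun j ↦ (A i j : R)).sum

/-- The action of `h i` on the free Verma module of lowest weight `wt`. -/
def wordCartan (i : B) : Module.End R M := b.constr R fun l ↦ wordWeight A wt i l • b l

@[simp]
theorem wordCartan_basis (i : B) (l : List B) :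
    wordCartan b A wt i (b l) = wordWeight A wt i l • b l :=
  b.constr_basis ..

theorem lie_wordCartan_wordRaise (i j : B) :
    ⁅wordCartan b A wt i, wordRaise b j⁆ = A i j • wordRaise b j := by
  refine b.ext fun l ↦ ?_
  simp [Ring.lie_def, wordWeight, ← sub_smul, Int.cast_smul_eq_zsmul]

theorem lie_wordCartan_wordCartan (i j : B) : ⁅wordCartan b A wt i, wordCartan b A wt j⁆ = 0 := by
  refine b.ext fun l ↦ ?_
  simp [Ring.lie_def, smul_smul, mul_comm]

variable [DecidableEq B]

/-- The value of `f i` on a word, found by commuting `f i` past the letters. -/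
def lowerWord (i : B) : List B → M
  | [] => 0
  | j :: l => wordRaise b j (lowerWord i l) - if j = i then wordWeight A wt i l • b l else 0

/-- The action of `f i` on the free Verma module of lowest weight `wt`. -/
def wordLower (i : B) : Module.End R M := b.constr R (lowerWord b A wt i)

@[simp]
theorem wordLower_basis (i : B) (l : List B) : wordLower b A wt i (b l) = lowerWord b A wt i l :=
  b.constr_basis ..

theorem lie_wordRaise_wordLower (i j : B) :
    ⁅wordRaise b j, wordLower b A wt i⁆ = if j = i then wordCartan b A wt i else 0 := by
  refine b.ext fun l ↦ ?_
  split_ifs with hji <;> simp [Ring.lie_def, lowerWord, hji]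

theorem lie_wordCartan_wordLower (i j : B) :
    ⁅wordCartan b A wt i, wordLower b A wt j⁆ = -(A i j • wordLower b A wt j) := by
  rw [eq_neg_iff_add_eq_zero]
  refine eq_zero_of_lie_wordRaise_eq_zero b (by simp [Ring.lie_def, lowerWord]) fun k ↦ ?_
  rw [lie_add, leibniz_lie, lie_zsmul, ← lie_skew (wordRaise b k), lie_wordCartan_wordRaise,
    neg_lie, zsmul_lie, lie_wordRaise_wordLower]
  split_ifs with hkj
  · simp [hkj, lie_wordCartan_wordCartan]
  · simp

theorem chevalleyRelations_word :
    ChevalleyRelations A (wordCartan b A wt) (wordRaise b) (wordLower b A wt) where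
  lie_h_h := lie_wordCartan_wordCartan b A wt
  lie_e_f i := by rw [lie_wordRaise_wordLower, if_pos rfl]
  lie_e_f_of_ne i j hij := by rw [lie_wordRaise_wordLower, if_neg hij]
  lie_h_e := lie_wordCartan_wordRaise b A wt
  lie_h_f := lie_wordCartan_wordLower b A wt

variable {A} in
theorem serreRelations_wordLower (hA : IsGCM A) : SerreRelations R A (wordLower b A wt) := by
  intro i j
  obtain rfl | hij := eq_or_ne i j
  · exact serreElement_self R _ i
  refine eq_zero_of_lie_wordRaise_eq_zero b ?_ fun k ↦
    (chevalleyRelations_word b A wt).lie_e_serreElement R hA k hij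
  suffices ∀ n, ((ad R (Module.End R M) (wordLower b A wt i) ^ n) (wordLower b A wt j)) (b []) = 0
    from this _
  intro n
  induction n with
  | zero => simp [lowerWord]
  | succ n ih => simp [pow_succ', Ring.lie_def, ih, lowerWord]

end FreeVerma

section Intertwining

variable {R M Q : Type*} [CommRing R] [AddCommGroup M] [Module R M] [AddCommGroup Q] [Module R Q]
  {D : M →ₗ[R] Q}

theorem comp_lie_eq_lie_comp {a b : Module.End R M} {a' b' : Module.End R Q}
    (ha : D ∘ₗ a = a' ∘ₗ D) (hb : D ∘ₗ b = b' ∘ₗ D) : D ∘ₗ ⁅a, b⁆ = ⁅a', b'⁆ ∘ₗ D := by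
  have ha' (m : M) : D (a m) = a' (D m) := LinearMap.congr_fun ha m
  have hb' (m : M) : D (b m) = b' (D m) := LinearMap.congr_fun hb m
  ext m
  simp [Ring.lie_def, ha', hb']

variable {B : Type*} {A : Matrix B B ℤ}

theorem comp_serreElement_eq_serreElement_comp {x : B → Module.End R M} {y : B → Module.End R Q}
    (hxy : ∀ i, D ∘ₗ x i = y i ∘ₗ D) (i j : B) :
    D ∘ₗ serreElement R A x i j = serreElement R A y i j ∘ₗ D := by
  suffices ∀ n, D ∘ₗ (ad R _ (x i) ^ n) (x j) = (ad R _ (y i) ^ n) (y j) ∘ₗ D from this _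
  intro n
  induction n with
  | zero => exact hxy j
  | succ n ih =>
    simp only [pow_succ', Module.End.mul_apply, ad_apply]
    exact comp_lie_eq_lie_comp (hxy i) ih

theorem serreRelations_of_surjective {x : B → Module.End R M} {y : B → Module.End R Q}
    (hD : Function.Surjective D) (hxy : ∀ i, D ∘ₗ x i = y i ∘ₗ D)
    (hserre : ∀ i j m, D (serreElement R A x i j m) = 0) : SerreRelations R A y := by
  intro i j
  rw [← LinearMap.cancel_right hD, ← comp_serreElement_eq_serreElement_comp hxy]
  exact LinearMap.ext (hserre i j)

theorem ChevalleyRelations.of_surjective {h e f : B → Module.End R M}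
    {h' e' f' : B → Module.End R Q} (r : ChevalleyRelations A h e f) (hD : Function.Surjective D)
    (hh : ∀ i, D ∘ₗ h i = h' i ∘ₗ D) (he : ∀ i, D ∘ₗ e i = e' i ∘ₗ D)
    (hf : ∀ i, D ∘ₗ f i = f' i ∘ₗ D) : ChevalleyRelations A h' e' f' where
  lie_h_h i j := by
    rw [← LinearMap.cancel_right hD, ← comp_lie_eq_lie_comp (hh i) (hh j), r.lie_h_h]
    simp
  lie_e_f i := by
    rw [← LinearMap.cancel_right hD, ← comp_lie_eq_lie_comp (he i) (hf i), r.lie_e_f, hh]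
  lie_e_f_of_ne i j hij := by
    rw [← LinearMap.cancel_right hD, ← comp_lie_eq_lie_comp (he i) (hf j), r.lie_e_f_of_ne i j hij]
    simp
  lie_h_e i j := by
    rw [← LinearMap.cancel_right hD, ← comp_lie_eq_lie_comp (hh i) (he j), r.lie_h_e]
    ext m
    simpa using congrArg (A i j • ·) (LinearMap.congr_fun (he j) m)
  lie_h_f i j := by
    rw [← LinearMap.cancel_right hD, ← comp_lie_eq_lie_comp (hh i) (hf j), r.lie_h_f]
    ext m
    simpa using congrArg (A i j • ·) (LinearMap.congr_fun (hf j) m)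

end Intertwining

section Verma

variable {R B M : Type*} [CommRing R] [AddCommGroup M] [Module R M]
  (b : Module.Basis (List B) R M) (A : Matrix B B ℤ)

/-- The submodule of the free Verma module generated by the values of the Serre elements; the
quotient by it is the Verma module of the Kac–Moody algebra. Only stability under the `e i` is
imposed, since the `h i` and `f i` have brackets with the Serre elements that are multiples of
these. -/
def serreSubmodule : Submodule R M :=
  sInf {P | (∀ k, P ≤ P.comap (wordRaise b k)) ∧
    ∀ i j m, serreElement R A (wordRaise b) i j m ∈ P}

variable {b A} in
theorem serreSubmodule_le {P : Submodule R M} (hraise : ∀ k, P ≤ P.comap (wordRaise b k))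
    (hserre : ∀ i j m, serreElement R A (wordRaise b) i j m ∈ P) : serreSubmodule b A ≤ P :=
  sInf_le ⟨hraise, hserre⟩

theorem serreElement_mem_serreSubmodule (i j : B) (m : M) :
    serreElement R A (wordRaise b) i j m ∈ serreSubmodule b A :=
  Submodule.mem_sInf.2 fun _ hP ↦ hP.2 i j m

theorem serreSubmodule_le_comap_wordRaise (k : B) :
    serreSubmodule b A ≤ (serreSubmodule b A).comap (wordRaise b k) :=
  fun _ hm ↦ Submodule.mem_sInf.2 fun _ hP ↦ hP.1 k (Submodule.mem_sInf.1 hm _ hP)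

variable {b A} in
theorem serreSubmodule_le_comap_of_lie_mem {T : Module.End R M}
    (hraise : ∀ k, serreSubmodule b A ≤ (serreSubmodule b A).comap ⁅wordRaise b k, T⁆)
    (hserre : ∀ i j m, ⁅T, serreElement R A (wordRaise b) i j⁆ m ∈ serreSubmodule b A) :
    serreSubmodule b A ≤ (serreSubmodule b A).comap T := by
  set N := serreSubmodule b A
  suffices N ≤ N ⊓ N.comap T from this.trans inf_le_right
  refine serreSubmodule_le (fun k m ⟨hm, hTm⟩ ↦ ?_) fun i j m ↦ ?_
  · refine ⟨serreSubmodule_le_comap_wordRaise b A k hm, ?_⟩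
    have h := N.sub_mem (serreSubmodule_le_comap_wordRaise b A k hTm) (hraise k hm)
    simpa [Ring.lie_def] using h
  · refine ⟨serreElement_mem_serreSubmodule b A i j m, ?_⟩
    have h := N.add_mem (hserre i j m) (serreElement_mem_serreSubmodule b A i j (T m))
    simpa [Ring.lie_def] using h

variable (wt : B → R)

theorem serreSubmodule_le_comap_wordCartan (i : B) :
    serreSubmodule b A ≤ (serreSubmodule b A).comap (wordCartan b A wt i) := by
  classical
  have r := chevalleyRelations_word b A wt
  refine serreSubmodule_le_comap_of_lie_mem (fun k m hm ↦ ?_) fun j k m ↦ ?_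
  · rw [← lie_skew, r.lie_h_e]
    simpa using zsmul_mem (serreSubmodule_le_comap_wordRaise b A k hm) _
  · have h := r.symm.lie_h_ad_pow_f R i j k ((-A j k).toNat + 1)
    rw [Pi.neg_apply, neg_lie, neg_inj] at h
    rw [serreElement, h]
    exact zsmul_mem (serreElement_mem_serreSubmodule b A j k m) _

variable [DecidableEq B] {A}

theorem serreSubmodule_le_comap_wordLower (hA : IsGCM A) (i : B) :
    serreSubmodule b A ≤ (serreSubmodule b A).comap (wordLower b A wt i) := by
  refine serreSubmodule_le_comap_of_lie_mem (fun k m hm ↦ ?_) fun j k m ↦ ?_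
  · rw [Submodule.mem_comap, lie_wordRaise_wordLower]
    split_ifs
    · exact serreSubmodule_le_comap_wordCartan b A wt i hm
    · exact zero_mem _
  · obtain rfl | hjk := eq_or_ne j k
    · simp [serreElement_self]
    · simp [(chevalleyRelations_word b A wt).symm.lie_e_serreElement R hA i hjk]

theorem kacMoodyRelations_mapQ_serreSubmodule (hA : IsGCM A) : KacMoodyRelations R A
    (fun i ↦ Submodule.mapQ _ _ _ (serreSubmodule_le_comap_wordCartan b A wt i))
    (fun i ↦ Submodule.mapQ _ _ _ (serreSubmodule_le_comap_wordRaise b A i))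
    (fun i ↦ Submodule.mapQ _ _ _ (serreSubmodule_le_comap_wordLower b wt hA i)) where
  __ := (chevalleyRelations_word b A wt).of_surjective (serreSubmodule b A).mkQ_surjective
    (fun _ ↦ rfl) (fun _ ↦ rfl) (fun _ ↦ rfl)
  serre_e := serreRelations_of_surjective (serreSubmodule b A).mkQ_surjective (fun _ ↦ rfl)
    fun i j m ↦ (Submodule.Quotient.mk_eq_zero _).2 (serreElement_mem_serreSubmodule b A i j m)
  serre_f := serreRelations_of_surjective (serreSubmodule b A).mkQ_surjective (fun _ ↦ rfl)
    fun i j m ↦ by simp [serreRelations_wordLower b wt hA i j]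

end Verma

section HeightDetection

variable {R L : Type*} [CommRing R] [LieRing L] [LieAlgebra R L]

/-- The adjoint action of an element `x` of degree `n` on the extension `L ⊕ R d` of `L` by a
degree element `d`, normalized by `⁅x, d⁆ = n • x`. -/
def gradedAd (n : R) : L →ₗ[R] Module.End R (L × R) where
  toFun x := LinearMap.inl R L R ∘ₗ (ad R L x).coprod (LinearMap.toSpanSingleton R L (n • x))
  map_add' x y := by ext <;> simp
  map_smul' c x := by ext <;> simp [smul_comm n c]

@[simp]
theorem gradedAd_apply (n : R) (x : L) (p : L × R) :
    gradedAd n x p = (⁅x, p.1⁆ + (p.2 * n) • x, 0) := by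
  simp [gradedAd, smul_smul]

theorem lie_gradedAd (n m : R) (x y : L) :
    ⁅gradedAd n x, gradedAd m y⁆ = gradedAd (n + m) ⁅x, y⁆ := by
  refine LinearMap.ext fun p ↦ Prod.ext ?_ (by simp [Ring.lie_def])
  simp only [Ring.lie_def, LinearMap.sub_apply, Module.End.mul_apply, gradedAd_apply, zero_mul,
    zero_smul, add_zero, Prod.mk_sub_mk, lie_lie, lie_add, lie_smul]
  rw [← lie_skew x y]
  module

theorem ad_gradedAd_pow (n m : R) (x y : L) (k : ℕ) :
    (ad R _ (gradedAd n x) ^ k) (gradedAd m y) = gradedAd (k * n + m) ((ad R L x ^ k) y) := by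
  induction k with
  | zero => simp
  | succ k ih =>
    simp only [pow_succ', Module.End.mul_apply, ad_apply, ih, lie_gradedAd]
    congr 2
    push_cast
    ring

variable {B : Type*} {A : Matrix B B ℤ}

theorem SerreRelations.gradedAd {x : B → L} (hx : SerreRelations R A x) (n : R) :
    SerreRelations R A (fun i ↦ gradedAd n (x i)) := fun i j ↦ by
  rw [serreElement, ad_gradedAd_pow, ← serreElement, hx, map_zero]

theorem SerreRelations.extend {B' : Type*} {σ : B' → B} (hσ : Function.Injective σ) {x : B' → L}
    (hx : SerreRelations R (A.submatrix σ σ) x) : SerreRelations R A (Function.extend σ x 0) := by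
  intro i j
  by_cases hj : ∃ j', σ j' = j
  · by_cases hi : ∃ i', σ i' = i
    · obtain ⟨i, rfl⟩ := hi
      obtain ⟨j, rfl⟩ := hj
      simpa only [serreElement, hσ.extend_apply, Matrix.submatrix_apply] using hx i j
    · simp [serreElement, Function.extend_apply' _ _ _ hi]
  · simp [serreElement, Function.extend_apply' _ _ _ hj]

variable {V : Type*} [AddCommGroup V] [Module R V] (ρ : L →ₗ⁅R⁆ Module.End R V)
  (D : V →ₗ[R] L × R)

/-- The elements of `L` whose action on `V` corresponds under `D` to their action in degree `n` on
`L ⊕ R d`. -/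
def intertwinedPart (n : R) : Submodule R L where
  carrier := {x | D ∘ₗ ρ x = gradedAd n x ∘ₗ D}
  zero_mem' := by simp
  add_mem' {x y} (hx : D ∘ₗ ρ x = _) (hy : D ∘ₗ ρ y = _) := show D ∘ₗ ρ (x + y) = _ by
    rw [map_add, map_add, LinearMap.comp_add, LinearMap.add_comp, hx, hy]
  smul_mem' c x (hx : D ∘ₗ ρ x = _) := show D ∘ₗ ρ (c • x) = _ by
    rw [map_smul, map_smul, LinearMap.comp_smul, LinearMap.smul_comp, hx]

variable {ρ D}

theorem lie_mem_intertwinedPart {n m : R} {x y : L} (hx : x ∈ intertwinedPart ρ D n)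
    (hy : y ∈ intertwinedPart ρ D m) : ⁅x, y⁆ ∈ intertwinedPart ρ D (n + m) := by
  change D ∘ₗ ρ ⁅x, y⁆ = gradedAd (n + m) ⁅x, y⁆ ∘ₗ D
  rw [LieHom.map_lie, comp_lie_eq_lie_comp hx hy, lie_gradedAd]

theorem lieSpan_le_iSup_intertwinedPart {s : Set L} (hs : s ⊆ intertwinedPart ρ D 1) :
    (LieSubalgebra.lieSpan R L s).toSubmodule ≤ ⨆ n : ℕ, intertwinedPart ρ D (n + 1) := by
  refine lieSpan_le_of_lie_mem (fun x hx ↦ ?_) fun x hx y hy ↦ ?_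
  · exact Submodule.mem_iSup_of_mem 0 (by simpa using hs hx)
  · induction hy using Submodule.iSup_induction' with
    | mem n y hy =>
      refine Submodule.mem_iSup_of_mem (n + 1) ?_
      simpa [add_comm] using lie_mem_intertwinedPart (hs hx) hy
    | zero => simp
    | add y z _ _ ihy ihz => exact lie_add x y z ▸ add_mem ihy ihz

variable {v : V} (hv : D v = (0, 1))
include hv

theorem map_apply_of_mem_intertwinedPart {n : R} {x : L} (hx : x ∈ intertwinedPart ρ D n) :
    D (ρ x v) = (n • x, 0) := by
  simpa [hv] using LinearMap.congr_fun hx v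

theorem eq_zero_of_fst_map_apply_eq_zero [IsDomain R] [CharZero R] [Module.IsTorsionFree R L]
    {s : Set L} (hs : s ⊆ intertwinedPart ρ D 1) {x : L}
    (hx : x ∈ LieSubalgebra.lieSpan R L s) (h0 : (D (ρ x v)).1 = 0) : x = 0 := by
  let Δ : Module.End R L :=
    LinearMap.fst R L R ∘ₗ D ∘ₗ LinearMap.applyₗ v ∘ₗ ρ.toLinearMap
  have hle (n : R) : intertwinedPart ρ D n ≤ Δ.eigenspace n := fun y hy ↦
    Module.End.mem_eigenspace_iff.2 (congrArg Prod.fst (map_apply_of_mem_intertwinedPart hv hy))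
  have hpos : x ∈ ⨆ μ ≠ 0, Δ.eigenspace μ :=
    (lieSpan_le_iSup_intertwinedPart hs).trans (iSup_le fun n ↦ (hle _).trans <|
      le_iSup₂_of_le (n + 1 : R) (Nat.cast_add_one_ne_zero n) le_rfl) hx
  have hzero : x ∈ Δ.eigenspace 0 := Module.End.mem_eigenspace_iff.2 (by rwa [zero_smul])
  exact Submodule.disjoint_def.1 (Δ.eigenspaces_iSupIndep 0) x hzero hpos

end HeightDetection

section VermaEvaluation

variable {R B M Q : Type*} [CommRing R] [AddCommGroup M] [Module R M] [AddCommGroup Q]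
  [Module R Q] (b : Module.Basis (List B) R M) {A : Matrix B B ℤ} {T : B → Module.End R Q}

/-- Evaluation of a word in the operators `T` at the vector `q`. -/
def wordEval (T : B → Module.End R Q) (q : Q) : M →ₗ[R] Q :=
  b.constr R fun l ↦ l.foldr (fun j ↦ T j) q

@[simp]
theorem wordEval_basis (q : Q) (l : List B) :
    wordEval b T q (b l) = l.foldr (fun j ↦ T j) q :=
  b.constr_basis ..

theorem wordEval_comp_wordRaise (q : Q) (i : B) :
    wordEval b T q ∘ₗ wordRaise b i = T i ∘ₗ wordEval b T q :=
  b.ext fun l ↦ by simp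

theorem serreSubmodule_le_ker_wordEval (hT : SerreRelations R A T) (q : Q) :
    serreSubmodule b A ≤ (wordEval b T q).ker := by
  have hcomm := wordEval_comp_wordRaise b (T := T) q
  refine serreSubmodule_le (fun k m hm ↦ ?_) fun i j m ↦ ?_
  · have h : wordEval b T q (wordRaise b k m) = T k (wordEval b T q m) :=
      LinearMap.congr_fun (hcomm k) m
    rw [Submodule.mem_comap, LinearMap.mem_ker, h, LinearMap.mem_ker.1 hm, map_zero]
  · have h := LinearMap.congr_fun (comp_serreElement_eq_serreElement_comp (A := A) hcomm i j) m
    simpa [hT i j] using h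

/-- The map from the Verma module to `Q` which is compatible with the action of the `e i` and sends
the lowest weight vector to `q`. -/
def vermaEval (hT : SerreRelations R A T) (q : Q) : (M ⧸ serreSubmodule b A) →ₗ[R] Q :=
  (serreSubmodule b A).liftQ (wordEval b T q) (serreSubmodule_le_ker_wordEval b hT q)

variable (A) in
/-- The lowest weight vector of the Verma module. -/
def vermaVector : M ⧸ serreSubmodule b A :=
  (serreSubmodule b A).mkQ (b [])

@[simp]
theorem vermaEval_vermaVector (hT : SerreRelations R A T) (q : Q) :
    vermaEval b hT q (vermaVector b A) = q := by
  simp [vermaEval, vermaVector]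

end VermaEvaluation

section VermaAction

variable {B M : Type*} [DecidableEq B] [AddCommGroup M] [Module ℚ M]
  (b : Module.Basis (List B) ℚ M) {A : Matrix B B ℤ} (hA : IsGCM A) (wt : B → ℚ)

/-- The action of the Kac–Moody algebra on the Verma module of lowest weight `wt`. -/
def vermaAction : A.ToLieAlgebra ℚ →ₗ⁅ℚ⁆ Module.End ℚ (M ⧸ serreSubmodule b A) :=
  kmLift (kacMoodyRelations_mapQ_serreSubmodule b wt hA)

theorem vermaAction_gH_vermaVector (i : B) :
    vermaAction b hA wt (gH A i) (vermaVector b A) = wt i • vermaVector b A := by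
  simp [vermaAction, vermaVector, wordWeight]

theorem vermaAction_gF_vermaVector (i : B) :
    vermaAction b hA wt (gF A i) (vermaVector b A) = 0 := by
  simp [vermaAction, vermaVector, lowerWord]

variable {Q : Type*} [AddCommGroup Q] [Module ℚ Q] {T : B → Module.End ℚ Q}
  (hT : SerreRelations ℚ A T) (q : Q)

theorem vermaEval_comp_vermaAction_gE (i : B) :
    vermaEval b hT q ∘ₗ vermaAction b hA wt (gE A i) = T i ∘ₗ vermaEval b hT q := by
  refine Submodule.linearMap_qext _ ?_
  rw [vermaAction, kmLift_gE]
  exact wordEval_comp_wordRaise b q i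

/-- The map sending `x` to the image under `vermaEval` of `x v`, where `v` is the lowest weight
vector. -/
def orbitEval : A.ToLieAlgebra ℚ →ₗ[ℚ] Q :=
  vermaEval b hT q ∘ₗ LinearMap.applyₗ (vermaVector b A) ∘ₗ (vermaAction b hA wt).toLinearMap

theorem orbitEval_apply (x : A.ToLieAlgebra ℚ) : orbitEval b hA wt hT q x =
    vermaEval b hT q (vermaAction b hA wt x (vermaVector b A)) := rfl

theorem orbitEval_gH (i : B) : orbitEval b hA wt hT q (gH A i) = wt i • q := by
  rw [orbitEval_apply, vermaAction_gH_vermaVector, map_smul, vermaEval_vermaVector]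

theorem orbitEval_eq_zero_of_mem_lieSpan {x : A.ToLieAlgebra ℚ}
    (hx : x ∈ LieSubalgebra.lieSpan ℚ (A.ToLieAlgebra ℚ) (Set.range (gF A))) :
    orbitEval b hA wt hT q x = 0 := by
  suffices vermaAction b hA wt x (vermaVector b A) = 0 by rw [orbitEval_apply, this, map_zero]
  induction hx using LieSubalgebra.lieSpan_induction with
  | mem x hx =>
    obtain ⟨i, rfl⟩ := hx
    exact vermaAction_gF_vermaVector b hA wt i
  | zero => simp
  | add x y _ _ ihx ihy => simp [ihx, ihy]
  | smul c x _ ih => simp [ih]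
  | lie x y _ _ ihx ihy => simp [Ring.lie_def, ihx, ihy]

end VermaAction

section Embedding

variable {B B' L : Type*} [DecidableEq B] [LieRing L] [LieAlgebra ℚ L] {A : Matrix B B ℤ}
  {σ : B' → B} {h e f : B' → L} {φ : L →ₗ⁅ℚ⁆ A.ToLieAlgebra ℚ}

section Detection

variable {M : Type*} [AddCommGroup M] [Module ℚ M] (b : Module.Basis (List B) ℚ M) (hA : IsGCM A)
  (wt : B → ℚ) (hσ : Function.Injective σ) (he : SerreRelations ℚ (A.submatrix σ σ) e)
  (hφe : ∀ j, φ (e j) = gE A (σ j))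
include hφe

theorem range_subset_intertwinedPart :
    Set.range e ⊆ intertwinedPart ((vermaAction b hA wt).comp φ)
      (vermaEval b ((he.extend hσ).gradedAd 1) (0, 1)) 1 := by
  rintro _ ⟨j, rfl⟩
  change _ ∘ₗ vermaAction b hA wt (φ (e j)) = _
  rw [hφe, vermaEval_comp_vermaAction_gE, hσ.extend_apply]

theorem eq_zero_of_fst_orbitEval_eq_zero {x : L}
    (hx : x ∈ LieSubalgebra.lieSpan ℚ L (Set.range e))
    (h0 : (orbitEval b hA wt ((he.extend hσ).gradedAd 1) (0, 1) (φ x)).1 = 0) : x = 0 :=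
  eq_zero_of_fst_map_apply_eq_zero (vermaEval_vermaVector b _ _)
    (range_subset_intertwinedPart b hA wt hσ he hφe) hx h0

end Detection

theorem orbitEval_map_linearCombination {M Q : Type*} [AddCommGroup M] [Module ℚ M]
    [AddCommGroup Q] [Module ℚ Q] {b : Module.Basis (List B) ℚ M} {hA : IsGCM A} {wt : B → ℚ}
    {T : B → Module.End ℚ Q} {hT : SerreRelations ℚ A T} {q : Q}
    (hφh : ∀ j, φ (h j) = gH A (σ j)) (c : B' →₀ ℚ) :
    orbitEval b hA wt hT q (φ (c.linearCombination ℚ h)) =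
      c.linearCombination ℚ (wt ∘ σ) • q := by
  simp [Finsupp.linearCombination_apply, Finsupp.sum, hφh, orbitEval_gH, Finset.sum_smul,
    smul_smul]

theorem map_mem_lieSpan_gF (hφf : ∀ j, φ (f j) = gF A (σ j)) {x : L}
    (hx : x ∈ LieSubalgebra.lieSpan ℚ L (Set.range f)) :
    φ x ∈ LieSubalgebra.lieSpan ℚ (A.ToLieAlgebra ℚ) (Set.range (gF A)) := by
  refine (LieSubalgebra.lieSpan_le (K := (LieSubalgebra.lieSpan ℚ _ (Set.range (gF A))).comap φ)).2
    ?_ hx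
  rintro _ ⟨j, rfl⟩
  exact LieSubalgebra.subset_lieSpan ⟨σ j, (hφf j).symm⟩

variable (hA : IsGCM A) (hσ : Function.Injective σ)
  (hφh : ∀ j, φ (h j) = gH A (σ j)) (hφe : ∀ j, φ (e j) = gE A (σ j))
  (hφf : ∀ j, φ (f j) = gF A (σ j))
include hA hσ hφh hφe hφf

theorem eq_zero_of_map_triangular_sum_eq_zero (he : SerreRelations ℚ (A.submatrix σ σ) e)
    {x y : L} {c : B' →₀ ℚ} (hx : x ∈ LieSubalgebra.lieSpan ℚ L (Set.range f))
    (hy : y ∈ LieSubalgebra.lieSpan ℚ L (Set.range e))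
    (h0 : φ (c.linearCombination ℚ h + x + y) = 0) : c = 0 ∧ y = 0 := by
  let b : Module.Basis (List B) ℚ (List B →₀ ℚ) := Finsupp.basisSingleOne
  let E (wt : B → ℚ) := orbitEval b hA wt ((he.extend hσ).gradedAd 1) (0, 1)
  have hE (wt : B → ℚ) : c.linearCombination ℚ (wt ∘ σ) • ((0, 1) : L × ℚ) + E wt (φ y) = 0 := by
    rw [← map_zero (E wt), ← h0, map_add, map_add, map_add, map_add,
      orbitEval_eq_zero_of_mem_lieSpan b hA wt _ _ (map_mem_lieSpan_gF hφf hx), add_zero,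
      orbitEval_map_linearCombination hφh]
  have hy0 : y = 0 := eq_zero_of_fst_orbitEval_eq_zero b hA 0 hσ he hφe hy <| by
    simpa using congrArg Prod.fst (hE 0)
  have hc (wt : B → ℚ) : c.linearCombination ℚ (wt ∘ σ) = 0 := by
    simpa [hy0] using congrArg Prod.snd (hE wt)
  refine ⟨Finsupp.ext fun j ↦ ?_, hy0⟩
  classical
  simpa [Finsupp.linearCombination_apply, Pi.single_apply, hσ.eq_iff] using hc (Pi.single (σ j) 1)

theorem mem_lieSpan_f_of_map_eq_zero (r : KacMoodyRelations ℚ (A.submatrix σ σ) h e f)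
    (hspan : LieSubalgebra.lieSpan ℚ L (Set.range e ∪ Set.range f) = ⊤) {x : L} (hx : φ x = 0) :
    x ∈ LieSubalgebra.lieSpan ℚ L (Set.range f) := by
  have htop : x ∈ borelPart ℚ h f ⊔ borelPart ℚ h e :=
    r.borelPart_sup_borelPart_eq_top hspan ▸ Submodule.mem_top
  rw [borelPart, borelPart, ← sup_sup_distrib_left, ← sup_assoc] at htop
  obtain ⟨_, hu, y, hy, rfl⟩ := Submodule.mem_sup.1 htop
  obtain ⟨z, hz, w, hw, rfl⟩ := Submodule.mem_sup.1 hu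
  obtain ⟨c, rfl⟩ := Finsupp.mem_span_range_iff_exists_finsupp.1 hz
  obtain ⟨rfl, rfl⟩ :=
    eq_zero_of_map_triangular_sum_eq_zero hA hσ hφh hφe hφf r.serre_e hw hy hx
  simpa using hw

theorem injective_of_map_generators (r : KacMoodyRelations ℚ (A.submatrix σ σ) h e f)
    (hspan : LieSubalgebra.lieSpan ℚ L (Set.range e ∪ Set.range f) = ⊤) :
    Function.Injective φ := by
  refine (injective_iff_map_eq_zero φ).2 fun x hx ↦ ?_
  have hxf := mem_lieSpan_f_of_map_eq_zero hA hσ hφh hφe hφf r hspan hx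
  let ψ := (chevalleyInvolution A).comp φ
  have hψ (j : B') : ψ (f j) = gE A (σ j) := by simp [ψ, chevalleyInvolution, hφf]
  exact eq_zero_of_fst_orbitEval_eq_zero Finsupp.basisSingleOne hA 0 hσ r.serre_f hψ hxf
    (by simp [ψ, hx])

end Embedding

theorem node_deletion_embedding_general {B B' : Type*} [DecidableEq B] [DecidableEq B']
    (A : Matrix B B ℤ) (hA : IsGCM A) {σ : B' → B} (hσ : Function.Injective σ) :
    ∃ φ : (A.submatrix σ σ).ToLieAlgebra ℚ →ₗ⁅ℚ⁆ A.ToLieAlgebra ℚ,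
      (∀ j, φ (gH (A.submatrix σ σ) j) = gH A (σ j)) ∧
      (∀ j, φ (gE (A.submatrix σ σ) j) = gE A (σ j)) ∧
      (∀ j, φ (gF (A.submatrix σ σ) j) = gF A (σ j)) ∧ Function.Injective φ := by
  let r := (kacMoodyRelations_gH_gE_gF A).submatrix hσ
  refine ⟨kmLift r, kmLift_gH r, kmLift_gE r, kmLift_gF r, ?_⟩
  exact injective_of_map_generators hA hσ (kmLift_gH r) (kmLift_gE r) (kmLift_gF r)
    (kacMoodyRelations_gH_gE_gF _) (lieSpan_gE_union_gF _)

/-- **Subalgebra embedding from node deletion.** Let `A` be a GCM of size `k`, `i₀` an index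
and `A'` the principal submatrix of `A` obtained by deleting row and column `i₀` (indexed by
`{j // j ≠ i₀}`). Then there is a (well-defined) Lie algebra homomorphism `g(A') → g(A)`
sending each generator of `g(A')` to the same-named generator of `g(A)`, and it is
injective. -/
theorem node_deletion_embedding {k : ℕ} (A : Matrix (Fin k) (Fin k) ℤ) (hA : IsGCM A)
    (i₀ : Fin k) :
    ∃ φ : Matrix.ToLieAlgebra ℚ
            (A.submatrix (Subtype.val : {j : Fin k // j ≠ i₀} → Fin k) Subtype.val) →ₗ⁅ℚ⁆
          Matrix.ToLieAlgebra ℚ A,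
      (∀ j : {j : Fin k // j ≠ i₀},
          φ (gH (A.submatrix Subtype.val Subtype.val) j) = gH A j.val) ∧
      (∀ j : {j : Fin k // j ≠ i₀},
          φ (gE (A.submatrix Subtype.val Subtype.val) j) = gE A j.val) ∧
      (∀ j : {j : Fin k // j ≠ i₀},
          φ (gF (A.submatrix Subtype.val Subtype.val) j) = gF A j.val) ∧
      Function.Injective φ :=
  node_deletion_embedding_general A hA Subtype.val_injective
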